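/- Let (X,Σ,μ,T) be an ergodic measure-preserving ℤ^d-system. Then (X,μ,T) is weakly mixing if and only if every f ∈ L²(X,μ) that is not μ-a.e. constant is μ-mean sensitive. -/

import Mathlib

open MeasureTheory Filter Finset Metric
open scoped Classical

noncomputable section

/-- The box `{0,…,n−1}^d` inside `ℤ^d`. -/
def Fbox (d n : ℕ) : Finset (Fin d → ℤ) :=
  Fintype.piFinset fun _ => Finset.Icc (0 : ℤ) ((n : ℤ) - 1)

/-- Upper density of a subset of `ℤ^d` along the boxes `F_n`. -/
def upperDensity (d : ℕ) (S : Set (Fin d → ℤ)) : ℝ :=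
  Filter.limsup
    (fun n : ℕ => (((Fbox d n).filter (fun j => j ∈ S)).card : ℝ) / ((Fbox d n).card : ℝ))
    Filter.atTop

/-- Lower density of a subset of `ℤ^d` along the boxes `F_n`. -/
def lowerDensity (d : ℕ) (S : Set (Fin d → ℤ)) : ℝ :=
  Filter.liminf
    (fun n : ℕ => (((Fbox d n).filter (fun j => j ∈ S)).card : ℝ) / ((Fbox d n).card : ℝ))
    Filter.atTop

variable {X : Type*}

/-- The pseudometric `d_f(x,y) = limsup_n ((1/|F_n|) Σ_{j∈F_n} |f(T^j x) − f(T^j y)|²)^{1/2}`. -/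
def dF {d : ℕ} (T : (Fin d → ℤ) → X → X) (f : X → ℂ) (x y : X) : ℝ :=
  Filter.limsup (fun n : ℕ =>
    Real.sqrt ((∑ j ∈ Fbox d n, ‖f (T j x) - f (T j y)‖ ^ 2) / ((Fbox d n).card : ℝ)))
    Filter.atTop

/-- `x` is a generic point for `|f|²`:
the Birkhoff averages of `|f|²` along `x` converge to `∫ |f|² dμ`. -/
def genericSq {d : ℕ} [MeasurableSpace X] (μ : Measure X) (T : (Fin d → ℤ) → X → X)
    (f : X → ℂ) (x : X) : Prop :=
  Filter.Tendsto
    (fun n : ℕ => (∑ j ∈ Fbox d n, ‖f (T j x)‖ ^ 2) / ((Fbox d n).card : ℝ))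
    Filter.atTop (nhds (∫ y, ‖f y‖ ^ 2 ∂μ))

/-- `ε` is a `μ`-sensitivity constant for `f`: every positive measure set contains two
generic points `x, y` with `d_f(x,y) > ε`. -/
def SensitivityConstant {d : ℕ} [MeasurableSpace X] (μ : Measure X)
    (T : (Fin d → ℤ) → X → X) (f : X → ℂ) (ε : ℝ) : Prop :=
  0 < ε ∧ ∀ A : Set X, MeasurableSet A → 0 < μ A →
    ∃ x ∈ A, ∃ y ∈ A, genericSq μ T f x ∧ genericSq μ T f y ∧ ε < dF T f x y

/-- `f` is `μ`-mean sensitive (`f ∈ H_ms`). -/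
def MeanSensitiveFun {d : ℕ} [MeasurableSpace X] (μ : Measure X)
    (T : (Fin d → ℤ) → X → X) (f : X → ℂ) : Prop :=
  ∃ ε : ℝ, SensitivityConstant μ T f ε

theorem Fbox_card (d n : ℕ) : (Fbox d n).card = n ^ d := by
  simp [Fbox, Fintype.card_piFinset]

theorem mem_Fbox {d n : ℕ} {j : Fin d → ℤ} : j ∈ Fbox d n ↔ ∀ k, 0 ≤ j k ∧ j k < n := by
  simp only [Fbox, Fintype.mem_piFinset, Finset.mem_Icc]
  refine forall_congr' fun k => ?_
  omega

/-- translated box -/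
def tbox {d : ℕ} (j : Fin d → ℤ) (n : ℕ) : Finset (Fin d → ℤ) :=
  (Fbox d n).map (addRightEmbedding j)

theorem mem_tbox {d n : ℕ} {j i : Fin d → ℤ} :
    i ∈ tbox j n ↔ ∀ k, j k ≤ i k ∧ i k < j k + n := by
  simp only [tbox, Finset.mem_map, addRightEmbedding_apply]
  constructor
  · rintro ⟨a, ha, rfl⟩ k
    have := mem_Fbox.1 ha k
    simp only [Pi.add_apply]
    omega
  · intro h
    refine ⟨i - j, mem_Fbox.2 fun k => ?_, by simp⟩
    have := h k
    simp only [Pi.sub_apply]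
    omega

theorem tbox_card {d n : ℕ} {j : Fin d → ℤ} : (tbox j n).card = n ^ d := by
  rw [tbox, Finset.card_map, Fbox_card]

theorem sum_tbox {d n : ℕ} {j : Fin d → ℤ} {M : Type*} [AddCommMonoid M] (F : (Fin d → ℤ) → M) :
    ∑ i ∈ tbox j n, F i = ∑ i ∈ Fbox d n, F (i + j) := by
  simp [tbox, Finset.sum_map]

/-- Hardy-Littlewood type maximal estimate on `ℤ^d`. -/
theorem vitali_count {d : ℕ} (S : Finset (Fin d → ℤ)) (N : ℕ) (r : (Fin d → ℤ) → ℕ)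
    (hr1 : ∀ j ∈ S, 1 ≤ r j) (hrN : ∀ j ∈ S, r j ≤ N) (hS : S ⊆ Fbox d N)
    (F : (Fin d → ℤ) → ENNReal) (lam : ENNReal)
    (hF : ∀ j ∈ S, lam * (r j : ENNReal) ^ d ≤ ∑ i ∈ tbox j (r j), F i) :
    lam * (S.card : ENNReal) ≤ 3 ^ d * ∑ i ∈ Fbox d (2 * N), F i := by
  obtain ⟨u, hut, hdisj, hcov⟩ := Vitali.exists_disjoint_subfamily_covering_enlargement
    (fun j => ((tbox j (r j) : Finset (Fin d → ℤ)) : Set (Fin d → ℤ))) (S : Set (Fin d → ℤ))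
    (fun j => (r j : ℝ)) 2 (by norm_num) (fun a _ => by positivity) (N : ℝ)
    (fun a ha => by exact_mod_cast hrN a ha)
    (fun a ha => ⟨a, by
      have := hr1 a ha
      simp only [Finset.mem_coe, mem_tbox]
      intro k; omega⟩)
  have hufin : u.Finite := S.finite_toSet.subset hut
  set D := hufin.toFinset with hD
  have hDS : ∀ j ∈ D, j ∈ S := fun j hj => by
    have := hut (hufin.mem_toFinset.1 hj); simpa using this
  have h1 : S ⊆ D.biUnion fun k => tbox (fun l => k l - 2 * (r k : ℤ)) (3 * r k) := by
    intro j hj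
    obtain ⟨b, hb, ⟨i, hi1, hi2⟩, hle⟩ := hcov j hj
    refine Finset.mem_biUnion.2 ⟨b, hufin.mem_toFinset.2 hb, mem_tbox.2 fun k => ?_⟩
    have h1 := mem_tbox.1 (Finset.mem_coe.1 hi1) k
    have h2 := mem_tbox.1 (Finset.mem_coe.1 hi2) k
    have h3 : r j ≤ 2 * r b := by exact_mod_cast hle
    constructor <;> push_cast <;> omega
  have h2 : S.card ≤ ∑ k ∈ D, 3 ^ d * (r k) ^ d := by
    refine (Finset.card_le_card h1).trans (Finset.card_biUnion_le.trans (le_of_eq ?_))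
    refine Finset.sum_congr rfl fun k _ => ?_
    rw [tbox_card, mul_pow]
  calc lam * (S.card : ENNReal) ≤ lam * (∑ k ∈ D, 3 ^ d * (r k : ENNReal) ^ d) := by
        gcongr; exact_mod_cast h2
    _ = 3 ^ d * ∑ k ∈ D, lam * (r k : ENNReal) ^ d := by
        rw [← Finset.mul_sum]; rw [← Finset.mul_sum]; ring
    _ ≤ 3 ^ d * ∑ k ∈ D, ∑ i ∈ tbox k (r k), F i := by
        gcongr with k hk; exact hF k (hDS k hk)
    _ = 3 ^ d * ∑ i ∈ D.biUnion (fun k => tbox k (r k)), F i := by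
        rw [Finset.sum_biUnion]
        intro a ha b hb hab
        have := hdisj (hufin.mem_toFinset.1 ha) (hufin.mem_toFinset.1 hb) hab
        exact Finset.disjoint_coe.1 this
    _ ≤ 3 ^ d * ∑ i ∈ Fbox d (2 * N), F i := by
        gcongr
        intro i hi
        obtain ⟨k, hk, hik⟩ := Finset.mem_biUnion.1 hi
        refine mem_Fbox.2 fun l => ?_
        have h1 := mem_tbox.1 hik l
        have h2 := mem_Fbox.1 (hS (hDS k hk)) l
        have h3 := hrN k (hDS k hk)
        push_cast; omega

/-- Følner estimate. -/
theorem folner_bound {d : ℕ} (F : (Fin d → ℤ) → ℝ) (M : ℝ) (hM : ∀ i, |F i| ≤ M)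
    (j : Fin d → ℤ) (m : ℕ) (hm : ∀ k, |j k| ≤ m) (n : ℕ) (hn : 2 * m ≤ n) :
    |∑ i ∈ Fbox d n, F (i + j) - ∑ i ∈ Fbox d n, F i|
      ≤ 2 * M * ((n : ℝ) ^ d - ((n : ℝ) - 2 * m) ^ d) := by
  set C := tbox (fun _ : Fin d => (m : ℤ)) (n - 2 * m)
  have hC1 : C ⊆ Fbox d n := by
    intro i hi
    refine mem_Fbox.2 fun k => ?_
    have := mem_tbox.1 hi k
    omega
  have hC2 : C ⊆ tbox j n := by
    intro i hi
    refine mem_tbox.2 fun k => ?_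
    have := mem_tbox.1 hi k
    have := abs_le.1 (hm k)
    omega
  have hCc : (C.card : ℝ) = ((n : ℝ) - 2 * m) ^ d := by
    rw [tbox_card]; push_cast [hn]; ring
  have key : ∀ B : Finset (Fin d → ℤ), C ⊆ B → B.card = n ^ d →
      |∑ i ∈ B, F i - ∑ i ∈ C, F i| ≤ M * ((n : ℝ) ^ d - ((n : ℝ) - 2 * m) ^ d) := by
    intro B hB hBc
    rw [← Finset.sum_sdiff hB, add_sub_cancel_right]
    refine (Finset.abs_sum_le_sum_abs _ _).trans ((Finset.sum_le_sum fun i _ => hM i).trans ?_)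
    rw [Finset.sum_const, nsmul_eq_mul, Finset.card_sdiff_of_subset hB,
      Nat.cast_sub (Finset.card_le_card hB), hCc, hBc, mul_comm]
    push_cast; rfl
  rw [← sum_tbox]
  have h1 := abs_le.1 (key _ hC1 (Fbox_card d n))
  have h2 := abs_le.1 (key _ hC2 tbox_card)
  rw [abs_le]; constructor <;> nlinarith

theorem folner_tendsto {d : ℕ} (F : (Fin d → ℤ) → ℝ) (M : ℝ) (hM : ∀ i, |F i| ≤ M)
    (j : Fin d → ℤ) :
    Tendsto (fun n : ℕ => (∑ i ∈ Fbox d n, (F (i + j) - F i)) / ((Fbox d n).card : ℝ)) atTop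
      (nhds 0) := by
  obtain ⟨m, hm⟩ : ∃ m : ℕ, ∀ k, |j k| ≤ m := by
    refine ⟨∑ k, (j k).natAbs, fun k => ?_⟩
    rw [Int.abs_eq_natAbs]
    exact_mod_cast Finset.single_le_sum (f := fun k => (j k).natAbs) (fun _ _ => Nat.zero_le _)
      (Finset.mem_univ k)
  have hlim : Tendsto (fun n : ℕ => 2 * M * (1 - (1 - 2 * m * (1 / (n : ℝ))) ^ d)) atTop
      (nhds 0) := by
    have h := tendsto_one_div_atTop_nhds_zero_nat (𝕜 := ℝ)
    have := (((h.const_mul (2 * (m : ℝ))).const_sub 1).pow d).const_sub 1 |>.const_mul (2 * M)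
    simpa using this
  refine squeeze_zero_norm' ?_ hlim
  filter_upwards [eventually_ge_atTop (2 * m), eventually_gt_atTop 0] with n hn hn0
  have hn0' : (0 : ℝ) < n := by exact_mod_cast hn0
  rw [Real.norm_eq_abs, abs_div, Finset.sum_sub_distrib, Fbox_card]
  push_cast
  rw [abs_of_pos (pow_pos hn0' d), div_le_iff₀ (pow_pos hn0' d)]
  refine (folner_bound F M hM j m hm n hn).trans (le_of_eq ?_)
  have : (n : ℝ) - 2 * m = n * (1 - 2 * m * (1 / (n : ℝ))) := by field_simp
  rw [this, mul_pow]; ring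

theorem maximal_fin {d : ℕ} [MeasurableSpace X] (μ : Measure X)
    (T : (Fin d → ℤ) → X → X) (hT : ∀ j, MeasurePreserving (T j) μ μ)
    (hTadd : ∀ i j, T (i + j) = T i ∘ T j) (F : X → ENNReal) (hF : Measurable F)
    (lam : ENNReal) (N : ℕ) (hN : 1 ≤ N) :
    lam * μ {x | ∃ n, 1 ≤ n ∧ n ≤ N ∧ lam * (n : ENNReal) ^ d ≤ ∑ j ∈ Fbox d n, F (T j x)}
      ≤ 6 ^ d * ∫⁻ x, F x ∂μ := by
  set E := {x | ∃ n, 1 ≤ n ∧ n ≤ N ∧ lam * (n : ENNReal) ^ d ≤ ∑ j ∈ Fbox d n, F (T j x)} with hE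
  have hFT : ∀ j, Measurable fun x => F (T j x) := fun j => hF.comp (hT j).measurable
  have hEm : MeasurableSet E := by
    have : E = ⋃ n ∈ Finset.Icc 1 N,
        {x | lam * (n : ENNReal) ^ d ≤ ∑ j ∈ Fbox d n, F (T j x)} := by
      ext x; simp [hE, and_assoc]
    rw [this]
    refine Finset.measurableSet_biUnion _ fun n _ => ?_
    exact measurableSet_le measurable_const (Finset.measurable_sum _ fun j _ => hFT j)
  have hpt : ∀ x, lam * ∑ j ∈ Fbox d N, (T j ⁻¹' E).indicator (fun _ => (1 : ENNReal)) x
      ≤ 3 ^ d * ∑ i ∈ Fbox d (2 * N), F (T i x) := by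
    intro x
    have hch : ∀ j, ∃ n : ℕ, T j x ∈ E → 1 ≤ n ∧ n ≤ N ∧
        lam * (n : ENNReal) ^ d ≤ ∑ i ∈ Fbox d n, F (T i (T j x)) := by
      intro j
      by_cases h : T j x ∈ E
      · obtain ⟨n, hn⟩ := h
        exact ⟨n, fun _ => hn⟩
      · exact ⟨0, fun h' => absurd h' h⟩
    choose r hr using hch
    have := vitali_count ((Fbox d N).filter fun j => T j x ∈ E) N r
      (fun j hj => (hr j (Finset.mem_filter.1 hj).2).1)
      (fun j hj => (hr j (Finset.mem_filter.1 hj).2).2.1)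
      (Finset.filter_subset _ _) (fun i => F (T i x)) lam
      (fun j hj => by
        refine (hr j (Finset.mem_filter.1 hj).2).2.2.trans (le_of_eq ?_)
        rw [sum_tbox]
        simp [hTadd])
    refine le_trans (le_of_eq ?_) this
    congr 1
    rw [Finset.card_filter]
    push_cast
    refine Finset.sum_congr rfl fun j _ => ?_
    simp [Set.indicator_apply]
  have hint := lintegral_mono (μ := μ) hpt
  rw [lintegral_const_mul, lintegral_finsetSum, lintegral_const_mul, lintegral_finsetSum] at hint
  · have e1 : ∀ j, ∫⁻ x, (T j ⁻¹' E).indicator (fun _ => (1 : ENNReal)) x ∂μ = μ E := fun j => by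
      rw [lintegral_indicator_const ((hT j).measurable hEm), one_mul,
        (hT j).measure_preimage hEm.nullMeasurableSet]
    have e2 : ∀ j, ∫⁻ x, F (T j x) ∂μ = ∫⁻ x, F x ∂μ := fun j =>
      (hT j).lintegral_comp hF
    simp only [e1, e2, Finset.sum_const, nsmul_eq_mul, Fbox_card] at hint
    have hc0 : ((N ^ d : ℕ) : ENNReal) ≠ 0 := by
      have : N ^ d ≠ 0 := pow_ne_zero _ (by omega)
      exact_mod_cast this
    have hct : ((N ^ d : ℕ) : ENNReal) ≠ ⊤ := ENNReal.natCast_ne_top _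
    rw [← ENNReal.mul_le_mul_iff_right hc0 hct]
    calc ((N ^ d : ℕ) : ENNReal) * (lam * μ E) = lam * (((N ^ d : ℕ) : ENNReal) * μ E) := by ring
      _ ≤ _ := hint
      _ = _ := by
        push_cast
        rw [mul_pow, show (6 : ENNReal) = 3 * 2 by norm_num, mul_pow]
        ring
  · intro j _; exact hFT j
  · exact Finset.measurable_sum _ fun j _ => hFT j
  · intro j _; exact measurable_const.indicator ((hT j).measurable hEm)
  · exact Finset.measurable_sum _ fun j _ => measurable_const.indicator ((hT j).measurable hEm)

theorem maximal_ineq {d : ℕ} [MeasurableSpace X] (μ : Measure X)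
    (T : (Fin d → ℤ) → X → X) (hT : ∀ j, MeasurePreserving (T j) μ μ)
    (hTadd : ∀ i j, T (i + j) = T i ∘ T j) (F : X → ENNReal) (hF : AEMeasurable F μ)
    (lam : ENNReal) :
    lam * μ {x | ∃ n : ℕ, 1 ≤ n ∧ lam * (n : ENNReal) ^ d ≤ ∑ j ∈ Fbox d n, F (T j x)}
      ≤ 6 ^ d * ∫⁻ x, F x ∂μ := by
  have hae : ∀ᵐ x ∂μ, ∀ j, F (T j x) = hF.mk F (T j x) := by
    rw [ae_all_iff]
    intro j
    exact (hT j).quasiMeasurePreserving.ae hF.ae_eq_mk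
  rw [lintegral_congr_ae hF.ae_eq_mk]
  set G := hF.mk F
  have hG : Measurable G := hF.measurable_mk
  have h1 : μ {x | ∃ n : ℕ, 1 ≤ n ∧ lam * (n : ENNReal) ^ d ≤ ∑ j ∈ Fbox d n, F (T j x)}
      = μ (⋃ N : ℕ, {x | ∃ n, 1 ≤ n ∧ n ≤ N + 1 ∧
        lam * (n : ENNReal) ^ d ≤ ∑ j ∈ Fbox d n, G (T j x)}) := by
    refine measure_congr ?_
    filter_upwards [hae] with x hx
    refine propext ?_
    constructor
    · rintro ⟨n, hn, h⟩
      refine Set.mem_iUnion.2 ⟨n, n, hn, by omega, ?_⟩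
      simpa only [hx] using h
    · intro hx'
      obtain ⟨N, n, hn, _, h⟩ := Set.mem_iUnion.1 hx'
      refine ⟨n, hn, ?_⟩
      simpa only [hx] using h
  rw [h1, Monotone.measure_iUnion, ENNReal.mul_iSup]
  · exact iSup_le fun N => maximal_fin μ T hT hTadd G hG lam (N + 1) (by omega)
  · rintro N M hNM x ⟨n, h1, h2, h3⟩
    exact ⟨n, h1, by omega, h3⟩

/-- Birkhoff averages along boxes. -/
def avg {d : ℕ} (T : (Fin d → ℤ) → X → X) (f : X → ℝ) (n : ℕ) (x : X) : ℝ :=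
  (∑ j ∈ Fbox d n, f (T j x)) / ((Fbox d n).card : ℝ)

/-- The pointwise ergodic theorem holds for `f`. -/
def Good {d : ℕ} [MeasurableSpace X] (μ : Measure X)
    (T : (Fin d → ℤ) → X → X) (f : X → ℝ) : Prop :=
  ∀ᵐ x ∂μ, Tendsto (fun n => avg T f n x) atTop (nhds (∫ y, f y ∂μ))

section

set_option linter.unusedSectionVars false

variable {d : ℕ} [MeasurableSpace X] {μ : Measure X} [IsProbabilityMeasure μ]
    {T : (Fin d → ℤ) → X → X}

theorem Good.congr (hT : ∀ j, MeasurePreserving (T j) μ μ) {f g : X → ℝ} (hf : Good μ T f)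
    (h : f =ᵐ[μ] g) : Good μ T g := by
  have hae : ∀ᵐ x ∂μ, ∀ j, f (T j x) = g (T j x) := by
    rw [ae_all_iff]
    exact fun j => (hT j).quasiMeasurePreserving.ae h
  filter_upwards [hf, hae] with x hx hx2
  rw [← integral_congr_ae h]
  simpa only [avg, hx2] using hx

theorem Good.add {f g : X → ℝ} (hf : Good μ T f) (hg : Good μ T g) (hfi : Integrable f μ)
    (hgi : Integrable g μ) : Good μ T (f + g) := by
  filter_upwards [hf, hg] with x hx hx2
  have : ∫ y, (f + g) y ∂μ = ∫ y, f y ∂μ + ∫ y, g y ∂μ := integral_add hfi hgi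
  rw [this]
  refine (hx.add hx2).congr fun n => ?_
  simp [avg, Finset.sum_add_distrib, add_div]

theorem Good.smul {f : X → ℝ} (hf : Good μ T f) (c : ℝ) : Good μ T (c • f) := by
  filter_upwards [hf] with x hx
  have : ∫ y, (c • f) y ∂μ = c * ∫ y, f y ∂μ := integral_const_mul c f
  rw [this]
  refine (hx.const_mul c).congr fun n => ?_
  simp [avg, ← Finset.mul_sum, mul_div_assoc]

theorem Good.const (c : ℝ) : Good μ T (fun _ => c) := by
  refine Eventually.of_forall fun x => ?_
  refine Tendsto.congr' (f₁ := fun _ => c) ?_ (by simp)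
  filter_upwards [eventually_gt_atTop 0] with n hn
  have : (n : ℝ) ^ d ≠ 0 := pow_ne_zero _ (by exact_mod_cast hn.ne')
  simp [avg, Fbox_card]
  field_simp

theorem Good.cob_bdd (hTadd : ∀ i j, T (i + j) = T i ∘ T j)
    (hT : ∀ j, MeasurePreserving (T j) μ μ) {g : X → ℝ} (hg : Integrable g μ) (M : ℝ)
    (hM : ∀ x, |g x| ≤ M) (j : Fin d → ℤ) : Good μ T (fun x => g (T j x) - g x) := by
  refine Eventually.of_forall fun x => ?_
  have h0 : ∫ y, (g (T j y) - g y) ∂μ = 0 := by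
    have h1 : ∫ y, g (T j y) ∂μ = ∫ y, g y ∂μ := by
      have := integral_map (μ := μ) (hT j).measurable.aemeasurable (f := g)
        (by rw [(hT j).map_eq]; exact hg.1)
      rw [(hT j).map_eq] at this
      exact this.symm
    have h2 : Integrable (fun y => g (T j y)) μ := (hT j).integrable_comp_of_integrable hg
    rw [integral_sub h2 hg, h1, sub_self]
  rw [h0]
  refine (folner_tendsto (fun i => g (T i x)) M (fun i => hM _) j).congr fun n => ?_
  simp only [avg]
  congr 1
  refine Finset.sum_congr rfl fun i _ => ?_
  rw [add_comm i j, hTadd]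
  rfl

theorem Good.of_approx (hTadd : ∀ i j, T (i + j) = T i ∘ T j)
    (hT : ∀ j, MeasurePreserving (T j) μ μ) {f : X → ℝ} (hf : Integrable f μ)
    (happ : ∀ ε : ENNReal, ε ≠ 0 → ∃ g, Integrable g μ ∧ Good μ T g ∧ eLpNorm (f - g) 1 μ < ε) :
    Good μ T f := by
  have key : ∀ δ : ℝ, 0 < δ → ∀ᵐ x ∂μ, ∀ᶠ n in atTop, |avg T f n x - ∫ y, f y ∂μ| < 3 * δ := by
    intro δ hδ
    rw [ae_iff]
    by_contra hne
    set B := {x | ¬∀ᶠ n in atTop, |avg T f n x - ∫ y, f y ∂μ| < 3 * δ}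
    have hδ' : ENNReal.ofReal δ ≠ 0 := by simpa using hδ
    have h6 : (6 : ENNReal) ^ d ≠ 0 := pow_ne_zero _ (by norm_num)
    have h6t : (6 : ENNReal) ^ d ≠ ⊤ := ENNReal.pow_ne_top (by norm_num)
    have hε0 : min (ENNReal.ofReal δ) (ENNReal.ofReal δ * μ B / 6 ^ d) ≠ 0 := by
      refine (lt_min (pos_iff_ne_zero.2 hδ') (pos_iff_ne_zero.2 ?_)).ne'
      exact ENNReal.div_ne_zero.2 ⟨mul_ne_zero hδ' hne, h6t⟩
    obtain ⟨g, hgi, hg, hlt⟩ := happ _ hε0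
    have hlt1 := hlt.trans_le (min_le_left _ _)
    have hlt2 := hlt.trans_le (min_le_right _ _)
    rw [eLpNorm_one_eq_lintegral_enorm] at hlt1 hlt2
    have hmax := maximal_ineq μ T hT hTadd (fun x => ‖(f - g) x‖ₑ)
      (hf.sub hgi).1.enorm (ENNReal.ofReal δ)
    have hint : |∫ y, g y ∂μ - ∫ y, f y ∂μ| < δ := by
      rw [abs_sub_comm, ← integral_sub hf hgi]
      refine (norm_integral_le_integral_norm (μ := μ) (fun x => f x - g x)).trans_lt ?_
      have e := integral_norm_eq_lintegral_enorm (hf.sub hgi).1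
      simp only [Pi.sub_apply] at e hlt1
      rw [e]
      exact (ENNReal.lt_ofReal_iff_toReal_lt hlt1.ne_top).1 hlt1
    have hsub : μ B ≤ μ {x | ∃ n : ℕ, 1 ≤ n ∧ ENNReal.ofReal δ * (n : ENNReal) ^ d ≤
        ∑ j ∈ Fbox d n, ‖(f - g) (T j x)‖ₑ} := by
      refine measure_mono_ae ?_
      filter_upwards [hg] with x hx hxB
      by_contra hxn
      refine hxB ?_
      have hx' : ∀ n : ℕ, 1 ≤ n → ∑ j ∈ Fbox d n, ‖(f - g) (T j x)‖ₑ
          < ENNReal.ofReal δ * (n : ENNReal) ^ d := by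
        intro n hn
        by_contra hc
        exact hxn ⟨n, hn, not_lt.1 hc⟩
      have hev := (Metric.tendsto_nhds.1 hx) δ hδ
      filter_upwards [hev, eventually_ge_atTop 1] with n hn hn1
      have h1 := hx' n hn1
      have hnp : (0 : ℝ) < (n : ℝ) ^ d := pow_pos (by exact_mod_cast hn1) _
      have h2 : ∑ j ∈ Fbox d n, |(f - g) (T j x)| < δ * (n : ℝ) ^ d := by
        have e1 : ∑ j ∈ Fbox d n, ‖(f - g) (T j x)‖ₑ
            = ENNReal.ofReal (∑ j ∈ Fbox d n, |(f - g) (T j x)|) := by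
          rw [ENNReal.ofReal_sum_of_nonneg (fun _ _ => abs_nonneg _)]
          refine Finset.sum_congr rfl fun j _ => ?_
          rw [Real.enorm_eq_ofReal_abs]
        have e2 : ENNReal.ofReal δ * (n : ENNReal) ^ d = ENNReal.ofReal (δ * (n : ℝ) ^ d) := by
          rw [ENNReal.ofReal_mul hδ.le, ENNReal.ofReal_pow (by positivity), ENNReal.ofReal_natCast]
        rw [e1, e2] at h1
        exact (ENNReal.ofReal_lt_ofReal_iff (by positivity)).1 h1
      have h3 : |avg T f n x - avg T g n x| < δ := by
        have : avg T f n x - avg T g n x = (∑ j ∈ Fbox d n, (f - g) (T j x)) / (n : ℝ) ^ d := by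
          simp [avg, Fbox_card, Finset.sum_sub_distrib, sub_div]
        rw [this, abs_div, abs_of_pos hnp, div_lt_iff₀ hnp]
        exact (Finset.abs_sum_le_sum_abs _ _).trans_lt h2
      rw [Real.dist_eq] at hn
      rw [abs_lt] at *
      constructor <;> linarith [hn.1, hn.2, h3.1, h3.2, hint.1, hint.2]
    have hfin : 6 ^ d * ∫⁻ x, ‖(f - g) x‖ₑ ∂μ < ENNReal.ofReal δ * μ B := by
      rw [mul_comm]
      exact (ENNReal.lt_div_iff_mul_lt (Or.inl h6) (Or.inl h6t)).1 hlt2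
    refine absurd (hmax.trans_lt hfin) (not_lt.2 ?_)
    gcongr
  have hall : ∀ᵐ x ∂μ, ∀ k : ℕ, ∀ᶠ n in atTop,
      |avg T f n x - ∫ y, f y ∂μ| < 3 * (1 / ((k : ℝ) + 1)) :=
    ae_all_iff.2 fun k => key _ (by positivity)
  filter_upwards [hall] with x hx
  rw [Metric.tendsto_nhds]
  intro ε hε
  obtain ⟨k, hk⟩ := exists_nat_one_div_lt (show (0 : ℝ) < ε / 3 by positivity)
  filter_upwards [hx k] with n hn
  rw [Real.dist_eq]
  linarith

theorem Good.cob (hTadd : ∀ i j, T (i + j) = T i ∘ T j)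
    (hT : ∀ j, MeasurePreserving (T j) μ μ) {g : X → ℝ} (hg : Integrable g μ)
    (j : Fin d → ℤ) : Good μ T (fun x => g (T j x) - g x) := by
  refine Good.of_approx hTadd hT (((hT j).integrable_comp_of_integrable hg).sub hg) ?_
  intro ε hε
  obtain ⟨s, hs, hsm⟩ := (memLp_one_iff_integrable.2 hg).exists_simpleFunc_eLpNorm_sub_lt
    (by simp) (ENNReal.half_pos hε).ne'
  have hsi := memLp_one_iff_integrable.1 hsm
  obtain ⟨M, hM⟩ := s.exists_forall_norm_le
  refine ⟨fun x => s (T j x) - s x, ((hT j).integrable_comp_of_integrable hsi).sub hsi,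
    Good.cob_bdd hTadd hT hsi M hM j, ?_⟩
  have e : ((fun x => g (T j x) - g x) - fun x => s (T j x) - s x)
      = (g - ⇑s) ∘ (T j) - (g - ⇑s) := by
    funext x; simp; ring
  rw [e]
  have hm : AEStronglyMeasurable (g - ⇑s) μ := (hg.sub hsi).1
  refine (eLpNorm_sub_le (hm.comp_measurePreserving (hT j)) hm le_rfl).trans_lt ?_
  rw [eLpNorm_comp_measurePreserving hm (hT j)]
  calc _ < ε / 2 + ε / 2 := ENNReal.add_lt_add hs hs
    _ = ε := ENNReal.add_halves ε

theorem ae_const_of_invariant (hTadd : ∀ i j, T (i + j) = T i ∘ T j)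
    (hT : ∀ j, MeasurePreserving (T j) μ μ)
    (herg : ∀ A : Set X, MeasurableSet A → (∀ j, T j ⁻¹' A = A) → μ A = 0 ∨ μ A = 1)
    {h : X → ℝ} (hm : AEStronglyMeasurable h μ) (hinv : ∀ j, h ∘ T j =ᵐ[μ] h) :
    ∃ c, h =ᵐ[μ] fun _ => c := by
  suffices H : ∃ c, hm.mk h =ᵐ[μ] Function.const X c by
    obtain ⟨c, hc⟩ := H
    exact ⟨c, hm.ae_eq_mk.trans hc⟩
  have hinv' : ∀ᵐ x ∂μ, ∀ j, hm.mk h (T j x) = hm.mk h x := by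
    rw [ae_all_iff]
    intro j
    filter_upwards [hinv j, hm.ae_eq_mk, (hT j).quasiMeasurePreserving.ae hm.ae_eq_mk]
      with x h1 h2 h3
    rw [← h2, ← h3]; exact h1
  have hmm : Measurable (hm.mk h) := hm.stronglyMeasurable_mk.measurable
  set k := hm.mk h
  refine exists_eventuallyEq_const_of_forall_separating MeasurableSet fun U hU => ?_
  set B : Set X := ⋂ j, T j ⁻¹' (k ⁻¹' U)
  have hB : MeasurableSet B := MeasurableSet.iInter fun j => (hT j).measurable (hmm hU)
  have hBinv : ∀ i, T i ⁻¹' B = B := by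
    intro i
    ext x
    simp only [B, Set.mem_preimage, Set.mem_iInter]
    constructor
    · intro hx j
      have := hx (j - i)
      rwa [← Function.comp_apply (f := T (j - i)), ← hTadd, sub_add_cancel] at this
    · intro hx j
      have := hx (j + i)
      rwa [hTadd] at this
  rcases herg B hB hBinv with h0 | h1
  · right
    have := measure_eq_zero_iff_ae_notMem.1 h0
    filter_upwards [this, hinv'] with x hx hx2 hxU
    refine hx (Set.mem_iInter.2 fun j => ?_)
    simpa [hx2] using hxU
  · left
    have := (mem_ae_iff_prob_eq_one hB).2 h1
    filter_upwards [this, hinv'] with x hx hx2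
    have := Set.mem_iInter.1 hx 0
    simpa [hx2] using this

theorem good_of_L2 (hTadd : ∀ i j, T (i + j) = T i ∘ T j)
    (hT : ∀ j, MeasurePreserving (T j) μ μ)
    (herg : ∀ A : Set X, MeasurableSet A → (∀ j, T j ⁻¹' A = A) → μ A = 0 ∨ μ A = 1)
    (f : Lp ℝ 2 μ) : Good μ T f := by
  have hint : ∀ u : Lp ℝ 2 μ, Integrable u μ := fun u => (Lp.memLp u).integrable (by norm_num)
  let G : Submodule ℝ (Lp ℝ 2 μ) :=
    { carrier := {u | Good μ T u}
      add_mem' := fun {a b} ha hb =>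
        (Good.add ha hb (hint a) (hint b)).congr hT (Lp.coeFn_add a b).symm
      zero_mem' := (Good.const 0).congr hT (Lp.coeFn_zero ℝ 2 μ).symm
      smul_mem' := fun c a ha => (Good.smul ha c).congr hT (Lp.coeFn_smul c a).symm }
  have hGc : IsClosed (G : Set (Lp ℝ 2 μ)) := by
    refine isClosed_of_closure_subset fun u hu => ?_
    refine Good.of_approx hTadd hT (hint u) fun ε hε => ?_
    obtain ⟨v, hv, huv⟩ := EMetric.mem_closure_iff.1 hu ε (pos_iff_ne_zero.2 hε)
    refine ⟨v, hint v, hv, ?_⟩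
    refine lt_of_le_of_lt ?_ huv
    rw [Lp.edist_def]
    exact eLpNorm_le_eLpNorm_of_exponent_le (by norm_num) ((hint u).sub (hint v)).1
  have hbot : Gᗮ = ⊥ := by
    rw [Submodule.eq_bot_iff]
    intro h hh
    rw [Submodule.mem_orthogonal] at hh
    have hUinv : ∀ j, Lp.compMeasurePreserving (T j) (hT j) h = h := by
      intro j
      set U := Lp.compMeasurePreserving (T j) (hT j) h with hU
      have hn : ‖U‖ = ‖h‖ := Lp.norm_compMeasurePreserving h (hT j)
      have hmem : U - h ∈ G := by
        refine (Good.cob hTadd hT (hint h) j).congr hT ?_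
        filter_upwards [Lp.coeFn_sub U h, Lp.coeFn_compMeasurePreserving h (hT j)] with x h1 h2
        rw [h1, Pi.sub_apply, hU, h2]
        rfl
      have h0 := hh _ hmem
      rw [inner_sub_left, real_inner_self_eq_norm_sq] at h0
      have h2 := norm_sub_sq_real U h
      have h3 : ‖U - h‖ ^ 2 = 0 := by rw [h2, hn]; linarith
      exact sub_eq_zero.1 (norm_eq_zero.1 (pow_eq_zero_iff (two_ne_zero) |>.1 h3))
    obtain ⟨c, hc⟩ := ae_const_of_invariant (h := h) hTadd hT herg (hint h).1 (fun j => by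
      have := Lp.coeFn_compMeasurePreserving h (hT j)
      rw [hUinv j] at this
      exact this.symm)
    have hG : h ∈ G := (Good.const c).congr hT hc.symm
    have := hh h hG
    exact inner_self_eq_zero.1 this
  have : G = ⊤ := by
    have hcomp : IsComplete (G : Set (Lp ℝ 2 μ)) := hGc.isComplete
    have : CompleteSpace G := hcomp.completeSpace_coe
    exact (Submodule.orthogonal_eq_bot_iff).1 hbot
  have hf : f ∈ G := by rw [this]; trivial
  exact hf

/-- Pointwise ergodic theorem for `ℤ^d` actions along boxes. -/
theorem pointwise_ergodic (hTadd : ∀ i j, T (i + j) = T i ∘ T j)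
    (hT : ∀ j, MeasurePreserving (T j) μ μ)
    (herg : ∀ A : Set X, MeasurableSet A → (∀ j, T j ⁻¹' A = A) → μ A = 0 ∨ μ A = 1)
    {f : X → ℝ} (hf : Integrable f μ) : Good μ T f := by
  refine Good.of_approx hTadd hT hf fun ε hε => ?_
  obtain ⟨s, hs, hsm⟩ := (memLp_one_iff_integrable.2 hf).exists_simpleFunc_eLpNorm_sub_lt
    (by simp) hε
  have hs2 : MemLp s 2 μ := s.memLp_of_isFiniteMeasure 2 μ
  exact ⟨s, memLp_one_iff_integrable.1 hsm,
    (good_of_L2 hTadd hT herg (hs2.toLp s)).congr hT hs2.coeFn_toLp, hs⟩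

end

section

set_option linter.unusedSectionVars false

variable {d : ℕ} [MeasurableSpace X] {μ : Measure X} [IsProbabilityMeasure μ]
    {T : (Fin d → ℤ) → X → X}

open scoped symmDiff

/-- Sections of a product-measurable set form a separable family. -/
theorem sections_separable (A : Set (X × X)) (hA : MeasurableSet A) :
    ∃ B : ℕ → Set X, (∀ k, MeasurableSet (B k)) ∧
      ∀ x, ∀ ε : ENNReal, ε ≠ 0 → ∃ k, μ ((Prod.mk x ⁻¹' A) ∆ B k) < ε := by
  induction A, hA using MeasurableSpace.induction_on_inter generateFrom_prod.symm
    isPiSystem_prod with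
  | empty =>
    exact ⟨fun _ => ∅, fun _ => MeasurableSet.empty, fun x ε hε => ⟨0, by
      simpa using pos_iff_ne_zero.2 hε⟩⟩
  | basic t ht =>
    obtain ⟨C, hC, D, hD, rfl⟩ := ht
    refine ⟨fun k => if k = 0 then ∅ else D, fun k => ?_, fun x ε hε => ?_⟩
    · dsimp only
      split_ifs
      · exact MeasurableSet.empty
      · exact hD
    · by_cases hx : x ∈ C
      · exact ⟨1, by simpa [hx] using pos_iff_ne_zero.2 hε⟩
      · exact ⟨0, by simpa [hx] using pos_iff_ne_zero.2 hε⟩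
  | compl t htm ih =>
    obtain ⟨B, hB, h⟩ := ih
    refine ⟨fun k => (B k)ᶜ, fun k => (hB k).compl, fun x ε hε => ?_⟩
    obtain ⟨k, hk⟩ := h x ε hε
    refine ⟨k, ?_⟩
    rwa [Set.preimage_compl, compl_symmDiff_compl]
  | iUnion f hdisj hfm ih =>
    choose B hB h using ih
    obtain ⟨e, he⟩ := exists_surjective_nat (Finset (ℕ × ℕ))
    refine ⟨fun k => ⋃ p ∈ e k, B p.1 p.2, fun k =>
      Finset.measurableSet_biUnion _ fun p _ => hB _ _, fun x ε hε => ?_⟩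
    by_cases hεt : ε = ⊤
    · exact ⟨0, hεt ▸ measure_lt_top _ _⟩
    have hdx : Pairwise (Function.onFun Disjoint fun n => Prod.mk x ⁻¹' (f n)) :=
      fun i j hij => (hdisj hij).preimage _
    have hmx : ∀ n, MeasurableSet (Prod.mk x ⁻¹' (f n)) := fun n => measurable_prodMk_left (hfm n)
    have hsum : ∑' n, μ (Prod.mk x ⁻¹' (f n)) ≠ ⊤ := by
      rw [← measure_iUnion hdx hmx]
      exact measure_ne_top _ _
    have htend := ENNReal.tendsto_sum_nat_add (fun n => μ (Prod.mk x ⁻¹' (f n))) hsum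
    have hε2 : ε / 2 ≠ 0 := (ENNReal.half_pos hε).ne'
    obtain ⟨N, hN⟩ := ((tendsto_order.1 htend).2 _ (pos_iff_ne_zero.2 hε2)).exists
    have hε3 : ε / 2 / (N + 1 : ℕ) ≠ 0 :=
      ENNReal.div_ne_zero.2 ⟨hε2, ENNReal.natCast_ne_top _⟩
    choose k hk using fun n => h n x _ hε3
    obtain ⟨m, hm⟩ := he ((Finset.range N).image fun n => (n, k n))
    refine ⟨m, ?_⟩
    have hsub : (Prod.mk x ⁻¹' ⋃ i, f i) ∆ (⋃ p ∈ e m, B p.1 p.2) ⊆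
        (⋃ n, Prod.mk x ⁻¹' (f (n + N))) ∪
          ⋃ n ∈ Finset.range N, (Prod.mk x ⁻¹' (f n)) ∆ B n (k n) := by
      rw [hm]
      intro y hy
      rcases Set.mem_symmDiff.1 hy with ⟨h1, h2⟩ | ⟨h1, h2⟩
      · obtain ⟨n, hn⟩ := Set.mem_iUnion.1 h1
        by_cases hnN : n < N
        · right
          refine Set.mem_biUnion (Finset.mem_coe.2 (Finset.mem_range.2 hnN)) ?_
          refine Set.mem_symmDiff.2 (Or.inl ⟨hn, fun hc => h2 ?_⟩)
          refine Set.mem_biUnion (x := (n, k n)) ?_ hc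
          simp only [Finset.mem_coe, Finset.mem_image]
          exact ⟨n, Finset.mem_range.2 hnN, rfl⟩
        · left
          refine Set.mem_iUnion.2 ⟨n - N, ?_⟩
          rw [Nat.sub_add_cancel (not_lt.1 hnN)]
          exact hn
      · right
        simp only [Set.mem_iUnion, exists_prop] at h1
        obtain ⟨p, hp, hyp⟩ := h1
        obtain ⟨n, hn, rfl⟩ := Finset.mem_image.1 hp
        refine Set.mem_biUnion (Finset.mem_coe.2 hn) ?_
        exact Set.mem_symmDiff.2 (Or.inr ⟨hyp, fun hc => h2 (Set.mem_iUnion.2 ⟨n, hc⟩)⟩)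
    calc _ ≤ _ := measure_mono hsub
      _ ≤ _ := measure_union_le _ _
      _ ≤ (∑' n, μ (Prod.mk x ⁻¹' (f (n + N)))) + ∑ n ∈ Finset.range N, ε / 2 / (N + 1 : ℕ) := by
        gcongr
        · exact measure_iUnion_le _
        · refine (measure_biUnion_finset_le _ _).trans (Finset.sum_le_sum fun n _ => (hk n).le)
      _ < ε / 2 + ε / 2 := by
        refine ENNReal.add_lt_add_of_lt_of_le ?_ hN ?_
        · rw [Finset.sum_const, nsmul_eq_mul, Finset.card_range]
          exact ENNReal.mul_ne_top (ENNReal.natCast_ne_top _) (ENNReal.div_ne_top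
            (ENNReal.div_ne_top hεt (by norm_num)) (by simp))
        · rw [Finset.sum_const, nsmul_eq_mul, Finset.card_range]
          calc (N : ENNReal) * (ε / 2 / (N + 1 : ℕ)) ≤ (N + 1 : ℕ) * (ε / 2 / (N + 1 : ℕ)) := by
                gcongr; omega
            _ ≤ ε / 2 := ENNReal.mul_div_le
      _ = ε := ENNReal.add_halves ε

theorem sections_small (A : Set (X × X)) (hA : MeasurableSet A) (ε : ENNReal) (hε : ε ≠ 0) :
    ∃ S : Set X, MeasurableSet S ∧ 0 < μ S ∧
      ∀ x ∈ S, ∀ y ∈ S, μ ((Prod.mk x ⁻¹' A) ∆ (Prod.mk y ⁻¹' A)) < ε := by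
  obtain ⟨B, hB, h⟩ := sections_separable (μ := μ) A hA
  have hε2 : ε / 2 ≠ 0 := (ENNReal.half_pos hε).ne'
  set S : ℕ → Set X := fun k => {x | μ ((Prod.mk x ⁻¹' A) ∆ B k) < ε / 2} with hS
  have hSm : ∀ k, MeasurableSet (S k) := by
    intro k
    have hm : MeasurableSet (A ∆ (Set.univ ×ˢ B k)) := hA.symmDiff (MeasurableSet.univ.prod (hB k))
    have := measurable_measure_prodMk_left (ν := μ) hm
    have e : ∀ x, Prod.mk x ⁻¹' (A ∆ (Set.univ ×ˢ B k)) = (Prod.mk x ⁻¹' A) ∆ B k := by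
      intro x; ext y; simp [Set.mem_symmDiff]
    simp only [e] at this
    exact measurableSet_lt this measurable_const
  have hU : ⋃ k, S k = Set.univ := by
    refine Set.eq_univ_of_forall fun x => Set.mem_iUnion.2 ?_
    exact h x _ hε2
  obtain ⟨k, hk⟩ : ∃ k, 0 < μ (S k) := by
    by_contra hc
    have h0 : ∀ k, μ (S k) = 0 := fun k => by
      by_contra h'
      exact hc ⟨k, pos_iff_ne_zero.2 h'⟩
    have := measure_iUnion_null h0
    rw [hU, measure_univ] at this
    exact one_ne_zero this
  refine ⟨S k, hSm k, hk, fun x hx y hy => ?_⟩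
  calc _ ≤ μ ((Prod.mk x ⁻¹' A) ∆ B k) + μ (B k ∆ (Prod.mk y ⁻¹' A)) :=
        measure_symmDiff_le _ _ _
    _ < ε / 2 + ε / 2 := by
        refine ENNReal.add_lt_add hx ?_
        rw [symmDiff_comm]; exact hy
    _ = ε := ENNReal.add_halves ε

/-- For a `T × T`-invariant set `A`, the functions `x ↦ μ (A_x ∩ C)` are not mean sensitive. -/
theorem not_sensitive (hT : ∀ j, MeasurePreserving (T j) μ μ)
    (A : Set (X × X)) (hA : MeasurableSet A)
    (hinv : ∀ j, (fun p : X × X => (T j p.1, T j p.2)) ⁻¹' A = A)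
    (C : Set X) (hC : MeasurableSet C) :
    ¬ MeanSensitiveFun μ T (fun x => ((μ.real ((Prod.mk x ⁻¹' A) ∩ C) : ℝ) : ℂ)) := by
  rintro ⟨ε, hε, hsens⟩
  obtain ⟨S, hSm, hSp, hS⟩ := sections_small (μ := μ) A hA (ENNReal.ofReal ε) (by simpa using hε)
  obtain ⟨x, hx, y, hy, -, -, hlt⟩ := hsens S hSm hSp
  refine absurd hlt (not_lt.2 ?_)
  have hT' : ∀ j x, μ.real ((Prod.mk (T j x) ⁻¹' A) ∩ C)
      = μ.real ((Prod.mk x ⁻¹' A) ∩ T j ⁻¹' C) := by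
    intro j x
    have hm : MeasurableSet ((Prod.mk (T j x) ⁻¹' A) ∩ C) := (measurable_prodMk_left hA).inter hC
    rw [measureReal_def, ← (hT j).measure_preimage hm.nullMeasurableSet, measureReal_def]
    congr 2
    ext z
    have : (T j x, T j z) ∈ A ↔ (x, z) ∈ A := by
      conv_rhs => rw [← hinv j]
      rfl
    simp [this]
  have hb : ∀ j, ‖((μ.real ((Prod.mk (T j x) ⁻¹' A) ∩ C) : ℝ) : ℂ)
      - ((μ.real ((Prod.mk (T j y) ⁻¹' A) ∩ C) : ℝ) : ℂ)‖ ≤ ε := by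
    intro j
    rw [hT', hT', ← Complex.ofReal_sub, Complex.norm_real, Real.norm_eq_abs]
    have hm : ∀ x, MeasurableSet ((Prod.mk x ⁻¹' A) ∩ T j ⁻¹' C) := fun x =>
      (measurable_prodMk_left hA).inter ((hT j).measurable hC)
    refine (abs_measureReal_sub_le_measureReal_symmDiff (hm x).nullMeasurableSet
      (hm y).nullMeasurableSet).trans ?_
    have h1 := hS x hx y hy
    have h2 : μ (((Prod.mk x ⁻¹' A) ∩ T j ⁻¹' C) ∆ ((Prod.mk y ⁻¹' A) ∩ T j ⁻¹' C))
        ≤ ENNReal.ofReal ε := by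
      refine (measure_mono ?_).trans h1.le
      intro z hz
      simp only [Set.mem_symmDiff, Set.mem_inter_iff] at hz ⊢
      tauto
    exact ENNReal.toReal_le_of_le_ofReal hε.le h2
  refine limsup_le_of_le (isCoboundedUnder_le_of_le atTop (x := 0) fun n => Real.sqrt_nonneg _)
    (Eventually.of_forall fun n => ?_)
  rw [Real.sqrt_le_left hε.le]
  refine div_le_of_le_mul₀ (by positivity) (by positivity) ?_
  refine (Finset.sum_le_card_nsmul _ _ (ε ^ 2) fun j _ => ?_).trans (le_of_eq ?_)
  · exact pow_le_pow_left₀ (norm_nonneg _) (hb j) 2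
  · rw [nsmul_eq_mul, mul_comm]

theorem rect_of_const (A : Set (X × X)) (hA : MeasurableSet A) (C : Set X) (hC : MeasurableSet C)
    (hc : ∃ c : ℂ, (fun x => ((μ.real ((Prod.mk x ⁻¹' A) ∩ C) : ℝ) : ℂ)) =ᵐ[μ] fun _ => c)
    (D : Set X) (hD : MeasurableSet D) :
    (μ.prod μ) ((D ×ˢ C) ∩ A) = (μ.prod μ) ((Set.univ ×ˢ C) ∩ A) * μ D := by
  obtain ⟨c, hc⟩ := hc
  have hc' : ∀ᵐ x ∂μ, μ ((Prod.mk x ⁻¹' A) ∩ C) = ENNReal.ofReal c.re := by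
    filter_upwards [hc] with x hx
    rw [← hx, Complex.ofReal_re, ofReal_measureReal]
  have key : ∀ D, MeasurableSet D →
      (μ.prod μ) ((D ×ˢ C) ∩ A) = ENNReal.ofReal c.re * μ D := by
    intro D hD
    rw [Measure.prod_apply ((hD.prod hC).inter hA)]
    have : ∀ᵐ x ∂μ, μ (Prod.mk x ⁻¹' ((D ×ˢ C) ∩ A))
        = D.indicator (fun _ => ENNReal.ofReal c.re) x := by
      filter_upwards [hc'] with x hx
      by_cases hxD : x ∈ D
      · rw [Set.indicator_of_mem hxD, ← hx]
        congr 1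
        ext z; simp [hxD, and_comm]
      · rw [Set.indicator_of_notMem hxD]
        have : Prod.mk x ⁻¹' ((D ×ˢ C) ∩ A) = ∅ := by
          ext z; simp [hxD]
        rw [this, measure_empty]
    rw [lintegral_congr_ae this, lintegral_indicator_const hD]
  rw [key D hD, key Set.univ MeasurableSet.univ, measure_univ, mul_one]

theorem prod_trivial (A : Set (X × X)) (hA : MeasurableSet A)
    (h1 : ∀ C D, MeasurableSet C → MeasurableSet D →
      (μ.prod μ) ((D ×ˢ C) ∩ A) = (μ.prod μ) ((Set.univ ×ˢ C) ∩ A) * μ D)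
    (h2 : ∀ C D, MeasurableSet C → MeasurableSet D →
      (μ.prod μ) ((D ×ˢ C) ∩ A) = (μ.prod μ) ((D ×ˢ Set.univ) ∩ A) * μ C) :
    (μ.prod μ) A = 0 ∨ (μ.prod μ) A = 1 := by
  by_cases h0 : (μ.prod μ) A = 0
  · exact Or.inl h0
  right
  have hrect : ∀ D C, MeasurableSet D → MeasurableSet C →
      (((μ.prod μ) A)⁻¹ • (μ.prod μ).restrict A) (D ×ˢ C) = μ D * μ C := by
    intro D C hD hC
    rw [Measure.smul_apply, Measure.restrict_apply (hD.prod hC), h1 C D hC hD,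
      h2 C Set.univ hC MeasurableSet.univ, Set.univ_prod_univ, Set.univ_inter, smul_eq_mul,
      mul_assoc, ← mul_assoc, ENNReal.inv_mul_cancel h0 (measure_ne_top _ _), one_mul, mul_comm]
  have heq := Measure.prod_eq hrect
  have hcompl : (μ.prod μ) Aᶜ = 0 := by
    rw [heq, Measure.smul_apply, Measure.restrict_apply hA.compl, Set.compl_inter_self,
      measure_empty, smul_zero]
  exact (prob_compl_eq_zero_iff hA).1 hcompl

theorem wm_of_sensitive (hT : ∀ j, MeasurePreserving (T j) μ μ)
    (h : ∀ f : X → ℂ, MemLp f 2 μ → (¬ ∃ c : ℂ, f =ᵐ[μ] fun _ => c) → MeanSensitiveFun μ T f)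
    (A : Set (X × X)) (hA : MeasurableSet A)
    (hinv : ∀ j, (fun p : X × X => (T j p.1, T j p.2)) ⁻¹' A = A) :
    (μ.prod μ) A = 0 ∨ (μ.prod μ) A = 1 := by
  have main : ∀ A : Set (X × X), MeasurableSet A →
      (∀ j, (fun p : X × X => (T j p.1, T j p.2)) ⁻¹' A = A) →
      ∀ C D, MeasurableSet C → MeasurableSet D →
      (μ.prod μ) ((D ×ˢ C) ∩ A) = (μ.prod μ) ((Set.univ ×ˢ C) ∩ A) * μ D := by
    intro A hA hinv C D hC hD
    refine rect_of_const A hA C hC ?_ D hD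
    by_contra hnc
    refine not_sensitive hT A hA hinv C hC (h _ ?_ hnc)
    have hm : Measurable fun x => μ ((Prod.mk x ⁻¹' A) ∩ C) := by
      have := measurable_measure_prodMk_left (ν := μ) (hA.inter (MeasurableSet.univ.prod hC))
      have e : ∀ x, Prod.mk x ⁻¹' (A ∩ (Set.univ ×ˢ C)) = (Prod.mk x ⁻¹' A) ∩ C := by
        intro x; ext y; simp
      simpa only [e] using this
    refine MemLp.of_bound (Complex.measurable_ofReal.comp
      hm.ennreal_toReal).aestronglyMeasurable 1 (Eventually.of_forall fun x => ?_)
    rw [Complex.norm_real, Real.norm_eq_abs, abs_of_nonneg measureReal_nonneg]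
    exact measureReal_le_one
  refine prod_trivial A hA (main A hA hinv) ?_
  intro C D hC hD
  have hsw := main (Prod.swap ⁻¹' A) (measurable_swap hA) (fun j => by
    conv_rhs => rw [← hinv j]
    rfl) D C hD hC
  have hmp : MeasurePreserving (Prod.swap : X × X → X × X) (μ.prod μ) (μ.prod μ) :=
    Measure.measurePreserving_swap
  have e : ∀ C D : Set X, MeasurableSet C → MeasurableSet D →
      (μ.prod μ) ((C ×ˢ D) ∩ Prod.swap ⁻¹' A) = (μ.prod μ) ((D ×ˢ C) ∩ A) := by
    intro C D hC hD
    rw [← hmp.measure_preimage ((hD.prod hC).inter hA).nullMeasurableSet]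
    congr 1
    ext ⟨a, b⟩
    simp
  rw [e C D hC hD, e _ _ MeasurableSet.univ hD] at hsw
  exact hsw

theorem sensitive_of_wm (hT : ∀ j, MeasurePreserving (T j) μ μ)
    (hTadd : ∀ i j, T (i + j) = T i ∘ T j)
    (herg : ∀ A : Set X, MeasurableSet A → (∀ j, T j ⁻¹' A = A) → μ A = 0 ∨ μ A = 1)
    (hwm : ∀ A : Set (X × X), MeasurableSet A →
        (∀ j, (fun p : X × X => (T j p.1, T j p.2)) ⁻¹' A = A) →
        (μ.prod μ) A = 0 ∨ (μ.prod μ) A = 1)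
    (f : X → ℂ) (hf : MemLp f 2 μ) (hnc : ¬ ∃ c : ℂ, f =ᵐ[μ] fun _ => c) :
    MeanSensitiveFun μ T f := by
  have hgen : ∀ᵐ x ∂μ, genericSq μ T f x :=
    pointwise_ergodic (f := fun x => ‖f x‖ ^ 2) hTadd hT herg
      ((memLp_two_iff_integrable_sq_norm hf.1).1 hf)
  have hf1 : MemLp (fun p : X × X => f p.1) 2 (μ.prod μ) :=
    hf.comp_measurePreserving measurePreserving_fst
  have hf2 : MemLp (fun p : X × X => f p.2) 2 (μ.prod μ) :=
    hf.comp_measurePreserving measurePreserving_snd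
  have hφ : Integrable (fun p : X × X => ‖f p.1 - f p.2‖ ^ 2) (μ.prod μ) :=
    (memLp_two_iff_integrable_sq_norm (hf1.sub hf2).1).1 (hf1.sub hf2)
  have hprod := pointwise_ergodic (T := fun j (p : X × X) => (T j p.1, T j p.2))
    (μ := μ.prod μ) (fun i j => by rw [hTadd]; rfl) (fun j => (hT j).prod (hT j)) hwm hφ
  set I := ∫ p, ‖f p.1 - f p.2‖ ^ 2 ∂(μ.prod μ) with hI
  have hIpos : 0 < I := by
    refine lt_of_le_of_ne (integral_nonneg fun p => by positivity) fun h0 => hnc ?_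
    have := (integral_eq_zero_iff_of_nonneg (fun p => by positivity) hφ).1 h0.symm
    have h2 := Measure.ae_ae_of_ae_prod this
    obtain ⟨x, hx⟩ := h2.exists
    refine ⟨f x, ?_⟩
    filter_upwards [hx] with y hy
    have : ‖f x - f y‖ ^ 2 = 0 := hy
    rw [pow_eq_zero_iff two_ne_zero, norm_eq_zero, sub_eq_zero] at this
    exact this.symm
  have hs : 0 < Real.sqrt I := Real.sqrt_pos.2 hIpos
  refine ⟨Real.sqrt I / 2, by positivity, fun A hA hAp => ?_⟩
  have hg1 : ∀ᵐ p ∂(μ.prod μ), genericSq μ T f p.1 :=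
    measurePreserving_fst.quasiMeasurePreserving.ae hgen
  have hg2 : ∀ᵐ p ∂(μ.prod μ), genericSq μ T f p.2 :=
    measurePreserving_snd.quasiMeasurePreserving.ae hgen
  have hAA : (μ.prod μ) (A ×ˢ A) ≠ 0 := by
    rw [Measure.prod_prod]
    exact mul_ne_zero hAp.ne' hAp.ne'
  have hfreq : ∃ᵐ p ∂(μ.prod μ), p ∈ A ×ˢ A := frequently_ae_mem_iff.2 hAA
  obtain ⟨⟨x, y⟩, hxy, ⟨h1, h2⟩, h3⟩ :=
    (hfreq.and_eventually ((hg1.and hg2).and hprod)).exists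
  refine ⟨x, hxy.1, y, hxy.2, h1, h2, ?_⟩
  have h4 : dF T f x y = Real.sqrt I := by
    have := (Real.continuous_sqrt.tendsto I).comp h3
    exact this.limsup_eq
  rw [h4]
  linarith

end

/-- an ergodic MPS is weakly mixing (the product action on `(X×X, μ×μ)` is
ergodic) iff every non-a.e.-constant `f ∈ L²(X,μ)` is `μ`-mean sensitive. -/
theorem stmt3 {d : ℕ}
    [MeasurableSpace X] (μ : Measure X) [IsProbabilityMeasure μ]
    (T : (Fin d → ℤ) → X → X)
    (hT : ∀ j, MeasurePreserving (T j) μ μ)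
    (hTadd : ∀ i j, T (i + j) = T i ∘ T j)
    (herg : ∀ A : Set X, MeasurableSet A → (∀ j, T j ⁻¹' A = A) → μ A = 0 ∨ μ A = 1) :
    (∀ A : Set (X × X), MeasurableSet A →
        (∀ j, (fun p : X × X => (T j p.1, T j p.2)) ⁻¹' A = A) →
        (μ.prod μ) A = 0 ∨ (μ.prod μ) A = 1) ↔
      ∀ f : X → ℂ, MemLp f 2 μ → (¬ ∃ c : ℂ, f =ᵐ[μ] fun _ => c) →
        MeanSensitiveFun μ T f := by
  exact ⟨fun hwm f hf hnc => sensitive_of_wm hT hTadd herg hwm f hf hnc,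
    fun h A hA hinv => wm_of_sensitive hT h A hA hinv⟩
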